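/- arXiv:2404.15249 — 2 statements merged into one kernel-verified Lean document; each statement's English description precedes it below -/
import Mathlib

section
/- Let v⁺, v⁻ : ℝ² → ℝ be three times continuously differentiable (ContDiff ℝ 3), fix (x,y) ∈ ℝ², and for each h > 0 let ξ_h ∈ [x, x+h] (the horizontal intersection abscissa of the interface with the grid line). Define the jumps at (ξ_h, y) by [v] = v⁺(ξ_h,y) − v⁻(ξ_h,y), [v_x] = ∂_x v⁺(ξ_h,y) − ∂_x v⁻(ξ_h,y), [v_xx] = ∂_xx v⁺(ξ_h,y) − ∂_xx v⁻(ξ_h,y). Define the horizontal truncation error at the exterior node, E_h = (v⁻(x+h,y) + v⁺(x−h,y) − 2·v⁺(x,y))/h² − ∂_xx v⁺(x,y), and the correction C_h⁺ = −(1/h²)·([v] + [v_x]·(x+h−ξ_h) + (1/2)·[v_xx]·(x+h−ξ_h)²). Then there exist constants C > 0 and δ > 0 such that for all 0 < h < δ and any choice of ξ_h ∈ [x, x+h], |E_h − C_h⁺| ≤ C·h. -/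
/-!
Let `R_f(a, b)` be the remainder at `b` of the second-order Taylor expansion of `f` about `a`.
Write `u`, `w` for the restrictions of `v⁺`, `v⁻` to the grid line. The correction polynomial in the
jumps is `T_ξ u - T_ξ w` at `x + h`, so adding it to `w (x + h)` turns that value into
`u (x + h) + R_w(ξ, x + h) - R_u(ξ, x + h)`. Hence, up to these two remainders, the corrected scheme
is the central second difference of `u` alone. All remainders are `O(h³)` uniformly in `ξ`, and the
scheme divides them by `h²`.
-/

open Set Filter Topology Asymptotics
open scoped Nat

section Taylor

variable {E : Type*} [NormedAddCommGroup E] [NormedSpace ℝ E] {f : ℝ → E} {n : ℕ}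

/-- The mean value inequality is applied in the expansion point: moving it from `a` to `b` turns
`taylorWithinEval f n s a b` into `f b`, and its derivative there has a single term. -/
theorem norm_sub_taylorWithinEval_le_of_convex {s : Set ℝ} {a b C : ℝ}
    (hs : Convex ℝ s) (hs_unique : UniqueDiffOn ℝ s) (hf : ContDiffOn ℝ (n + 1) f s)
    (hC : ∀ t ∈ s, ‖iteratedDerivWithin (n + 1) f s t‖ ≤ C) (ha : a ∈ s) (hb : b ∈ s) :
    ‖f b - taylorWithinEval f n s a b‖ ≤ C / n ! * |b - a| ^ (n + 1) := by
  have h_subset : uIcc a b ⊆ s := hs.ordConnected.uIcc_subset ha hb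
  have h_deriv : ∀ t ∈ uIcc a b, HasDerivWithinAt (fun t => taylorWithinEval f n s t b)
      (((n ! : ℝ)⁻¹ * (b - t) ^ n) • iteratedDerivWithin (n + 1) f s t) (uIcc a b) t :=
    fun t ht => (hasDerivWithinAt_taylorWithinEval hs_unique self_mem_nhdsWithin (h_subset ht)
      subset_rfl hf.of_succ (hf.differentiableOn_iteratedDerivWithin
        (mod_cast n.lt_succ_self) hs_unique t (h_subset ht))).mono h_subset
  have h_bound : ∀ t ∈ uIcc a b,
      ‖((n ! : ℝ)⁻¹ * (b - t) ^ n) • iteratedDerivWithin (n + 1) f s t‖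
        ≤ (n ! : ℝ)⁻¹ * |b - a| ^ n * C := fun t ht => by
    rw [norm_smul, norm_mul, norm_inv, norm_pow, RCLike.norm_natCast, Real.norm_eq_abs]
    gcongr _ * ?_ ^ n * ?_
    · exact abs_sub_right_of_mem_uIcc ht
    · exact hC t (h_subset ht)
  calc ‖f b - taylorWithinEval f n s a b‖
      = ‖taylorWithinEval f n s b b - taylorWithinEval f n s a b‖ := by rw [taylorWithinEval_self]
    _ ≤ (n ! : ℝ)⁻¹ * |b - a| ^ n * C * ‖b - a‖ :=
      (convex_uIcc a b).norm_image_sub_le_of_norm_hasDerivWithin_le h_deriv h_bound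
        left_mem_uIcc right_mem_uIcc
    _ = C / n ! * |b - a| ^ (n + 1) := by rw [Real.norm_eq_abs]; ring

theorem taylorWithinEval_eq_univ_of_isOpen {s : Set ℝ} {a : ℝ} (hs : IsOpen s) (ha : a ∈ s)
    (b : ℝ) : taylorWithinEval f n s a b = taylorWithinEval f n univ a b := by
  simp only [taylor_within_apply, iteratedDerivWithin_of_isOpen hs ha, iteratedDerivWithin_univ]

theorem taylorWithinEval_two_univ (f : ℝ → E) (a b : ℝ) :
    taylorWithinEval f 2 univ a b =
      f a + (b - a) • deriv f a + ((1 / 2) * (b - a) ^ 2) • iteratedDeriv 2 f a := by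
  simp [iteratedDerivWithin_univ, iteratedDeriv_one, one_add_one_eq_two]

theorem exists_ball_norm_iteratedDerivWithin_le {x : ℝ} (hf : ContDiffAt ℝ n f x) :
    ∃ r > 0, ContDiffOn ℝ n f (Metric.ball x r) ∧ ∃ C, ∀ t ∈ Metric.ball x r,
      ‖iteratedDerivWithin n f (Metric.ball x r) t‖ ≤ C := by
  obtain ⟨ε, hε, hfε⟩ := Metric.eventually_nhds_iff_ball.1 (hf.eventually (by simp))
  have hf_ball : ContDiffOn ℝ n f (Metric.ball x ε) := fun t ht => (hfε t ht).contDiffWithinAt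
  have h_closed : Metric.closedBall x (ε / 2) ⊆ Metric.ball x ε :=
    Metric.closedBall_subset_ball (half_lt_self hε)
  have h_half : Metric.ball x (ε / 2) ⊆ Metric.closedBall x (ε / 2) := Metric.ball_subset_closedBall
  obtain ⟨C, hC⟩ := (isCompact_closedBall x (ε / 2)).exists_bound_of_continuousOn
    ((hf_ball.continuousOn_iteratedDerivWithin le_rfl
      Metric.isOpen_ball.uniqueDiffOn).mono h_closed)
  refine ⟨ε / 2, half_pos hε, hf_ball.mono (h_half.trans h_closed), C, fun t ht => ?_⟩
  rw [iteratedDerivWithin_of_isOpen Metric.isOpen_ball ht,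
    ← iteratedDerivWithin_of_isOpen Metric.isOpen_ball (h_closed (h_half ht))]
  exact hC t (h_half ht)

theorem isBigO_sub_taylorWithinEval_nhds_prod {x : ℝ} (hf : ContDiffAt ℝ (n + 1) f x) :
    (fun p : ℝ × ℝ => f p.2 - taylorWithinEval f n univ p.1 p.2)
      =O[𝓝 (x, x)] fun p => (p.2 - p.1) ^ (n + 1) := by
  obtain ⟨r, hr, hf_ball, C, hC⟩ := exists_ball_norm_iteratedDerivWithin_le (n := n + 1) hf
  have h_mem : Metric.ball x r ×ˢ Metric.ball x r ∈ 𝓝 (x, x) :=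
    prod_mem_nhds (Metric.ball_mem_nhds x hr) (Metric.ball_mem_nhds x hr)
  refine IsBigO.of_bound (C / n !) ?_
  filter_upwards [h_mem] with p ⟨ha, hb⟩
  rw [← taylorWithinEval_eq_univ_of_isOpen Metric.isOpen_ball ha, norm_pow, Real.norm_eq_abs]
  exact norm_sub_taylorWithinEval_le_of_convex (convex_ball x r)
    Metric.isOpen_ball.uniqueDiffOn hf_ball hC ha hb

theorem isBigO_secondDifference_sub {x : ℝ} (hf : ContDiffAt ℝ 3 f x) :
    (fun h : ℝ => f (x + h) + f (x - h) - (2 : ℝ) • f x - h ^ 2 • iteratedDeriv 2 f x)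
      =O[𝓝 0] fun h => h ^ 3 := by
  have h_taylor := isBigO_sub_taylorWithinEval_nhds_prod (n := 2) (by exact_mod_cast hf)
  have h_right : Tendsto (fun h : ℝ => (x, x + h)) (𝓝 0) (𝓝 (x, x)) :=
    Continuous.tendsto' (by fun_prop) _ _ (by simp)
  have h_left : Tendsto (fun h : ℝ => (x, x - h)) (𝓝 0) (𝓝 (x, x)) :=
    Continuous.tendsto' (by fun_prop) _ _ (by simp)
  have h_right_rem := h_taylor.comp_tendsto h_right
  have h_left_rem := h_taylor.comp_tendsto h_left
  simp only [Function.comp_def, add_sub_cancel_left, sub_sub_cancel_left, Nat.reduceAdd,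
    taylorWithinEval_two_univ] at h_right_rem h_left_rem
  have h_cube : (fun h : ℝ => (-h) ^ 3) =O[𝓝 0] fun h => h ^ 3 :=
    (isBigO_refl _ _).neg_left.congr_left fun h => by ring
  refine (h_right_rem.add (h_left_rem.trans h_cube)).congr_left fun h => ?_
  module

end Taylor

namespace KFBI

variable {E : Type*} [NormedAddCommGroup E] [NormedSpace ℝ E]

/-- The truncation error `E_h` of the central second difference at the node `x`, which lies on the
side of `u`, when the neighbour `x + h` lies on the side of `w`. Both functions are restrictions to
the grid line; a negative `h` puts the interface to the left of the node. -/
noncomputable def truncationError (u w : ℝ → E) (x h : ℝ) : E :=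
  (h ^ 2)⁻¹ • (w (x + h) + u (x - h) - (2 : ℝ) • u x) - iteratedDeriv 2 u x

/-- The correction `C_h⁺` at the node `x`, built from the jumps `[v]`, `[v_x]`, `[v_xx]`
(side of `u` minus side of `w`) at the interface point `ξ`. -/
noncomputable def correction (u w : ℝ → E) (x h ξ : ℝ) : E :=
  -((h ^ 2)⁻¹ • ((u ξ - w ξ) + (x + h - ξ) • (deriv u ξ - deriv w ξ)
    + ((1 / 2) * (x + h - ξ) ^ 2) • (iteratedDeriv 2 u ξ - iteratedDeriv 2 w ξ)))

theorem truncationError_sub_correction (u w : ℝ → E) (x ξ : ℝ) {h : ℝ} (hh : h ≠ 0) :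
    truncationError u w x h - correction u w x h ξ = (h ^ 2)⁻¹ •
      ((u (x + h) + u (x - h) - (2 : ℝ) • u x - h ^ 2 • iteratedDeriv 2 u x)
        + ((w (x + h) - taylorWithinEval w 2 univ ξ (x + h))
          - (u (x + h) - taylorWithinEval u 2 univ ξ (x + h)))) := by
  rw [smul_add, smul_sub, inv_smul_smul₀ (pow_ne_zero 2 hh), taylorWithinEval_two_univ,
    taylorWithinEval_two_univ, truncationError, correction]
  module

end KFBI

open KFBI in
theorem kfbi_horizontal_correction_exterior_first_order_general
    {E : Type*} [NormedAddCommGroup E] [NormedSpace ℝ E] {u w : ℝ → E} {x : ℝ}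
    (hu : ContDiffAt ℝ 3 u x) (hw : ContDiffAt ℝ 3 w x) :
    ∃ C > 0, ∃ δ > 0, ∀ h : ℝ, h ≠ 0 → |h| < δ → ∀ ξ ∈ uIcc x (x + h),
      ‖truncationError u w x h - correction u w x h ξ‖ ≤ C * |h| := by
  obtain ⟨A, hA, h_central⟩ := (isBigO_secondDifference_sub hu).exists_pos
  obtain ⟨B, hB, h_taylor⟩ :=
    ((isBigO_sub_taylorWithinEval_nhds_prod (n := 2) (by exact_mod_cast hw)).sub
      (isBigO_sub_taylorWithinEval_nhds_prod (n := 2) (by exact_mod_cast hu))).exists_pos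
  obtain ⟨δ₁, hδ₁, h_central⟩ := Metric.eventually_nhds_iff.1 h_central.bound
  obtain ⟨δ₂, hδ₂, h_taylor⟩ := Metric.eventually_nhds_iff.1 h_taylor.bound
  refine ⟨A + B, by positivity, min δ₁ δ₂, lt_min hδ₁ hδ₂, fun h hh hδ ξ hξ => ?_⟩
  have hξ_left : |ξ - x| ≤ |h| := by simpa using abs_sub_left_of_mem_uIcc hξ
  have hξ_right : |x + h - ξ| ≤ |h| := by simpa using abs_sub_right_of_mem_uIcc hξ
  have h_dist : dist (ξ, x + h) (x, x) < δ₂ := by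
    rw [Prod.dist_eq, Real.dist_eq, Real.dist_eq, add_sub_cancel_left]
    exact (max_le hξ_left le_rfl).trans_lt (hδ.trans_le (min_le_right _ _))
  have h_central_le := h_central (y := h) (by simpa using hδ.trans_le (min_le_left _ _))
  have h_taylor_le := h_taylor h_dist
  rw [truncationError_sub_correction u w x ξ hh, norm_smul, norm_inv, norm_pow, Real.norm_eq_abs,
    inv_mul_le_iff₀ (by positivity)]
  rw [norm_pow, Real.norm_eq_abs] at h_central_le h_taylor_le
  calc _ ≤ A * |h| ^ 3 + B * |x + h - ξ| ^ 3 := norm_add_le_of_le h_central_le h_taylor_le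
    _ ≤ A * |h| ^ 3 + B * |h| ^ 3 := by gcongr
    _ = |h| ^ 2 * ((A + B) * |h|) := by ring

/-- First-order accuracy of the KFBI horizontal correction at an exterior
irregular node: the corrected truncation error is `O(h)`. -/
theorem kfbi_horizontal_correction_exterior_first_order
    (vp vm : ℝ × ℝ → ℝ) (hvp : ContDiff ℝ 3 vp) (hvm : ContDiff ℝ 3 vm)
    (x y : ℝ) :
    ∃ C > 0, ∃ δ > 0, ∀ h : ℝ, 0 < h → h < δ →
      ∀ ξ : ℝ, ξ ∈ Set.Icc x (x + h) →
      |((vm (x + h, y) + vp (x - h, y) - 2 * vp (x, y)) / h ^ 2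
            - iteratedDeriv 2 (fun t => vp (t, y)) x)
        - (-(1 / h ^ 2) *
            ((vp (ξ, y) - vm (ξ, y))
              + (deriv (fun t => vp (t, y)) ξ - deriv (fun t => vm (t, y)) ξ) * (x + h - ξ)
              + (1 / 2) *
                  (iteratedDeriv 2 (fun t => vp (t, y)) ξ
                    - iteratedDeriv 2 (fun t => vm (t, y)) ξ) * (x + h - ξ) ^ 2))|
        ≤ C * h := by
  obtain ⟨C, hC, δ, hδ, h_bound⟩ := kfbi_horizontal_correction_exterior_first_order_general
    (u := fun t => vp (t, y)) (w := fun t => vm (t, y)) (x := x) (by fun_prop) (by fun_prop)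
  exact ⟨C, hC, δ, hδ, fun h hh hhδ ξ hξ => by
    simpa [KFBI.truncationError, KFBI.correction, abs_of_pos hh, div_eq_inv_mul, mul_comm,
      mul_left_comm, mul_assoc]
      using h_bound h hh.ne' (by rwa [abs_of_pos hh]) ξ (Icc_subset_uIcc hξ)⟩
end

section
/- Let v⁺, v⁻ : ℝ² → ℝ be three times continuously differentiable (ContDiff ℝ 3), fix (x,y) ∈ ℝ², and for each h > 0 let ξ_h ∈ [x−h, x] (the horizontal intersection abscissa of the interface with the grid line). Define the jumps at (ξ_h, y) by [v] = v⁺(ξ_h,y) − v⁻(ξ_h,y), [v_x] = ∂_x v⁺(ξ_h,y) − ∂_x v⁻(ξ_h,y), [v_xx] = ∂_xx v⁺(ξ_h,y) − ∂_xx v⁻(ξ_h,y). Define the horizontal truncation error at the interior node, E_h = (v⁻(x+h,y) + v⁺(x−h,y) − 2·v⁻(x,y))/h² − ∂_xx v⁻(x,y), and the correction C_h⁻ = (1/h²)·([v] + [v_x]·(x−h−ξ_h) + (1/2)·[v_xx]·(x−h−ξ_h)²). Then there exist constants C > 0 and δ > 0 such that for all 0 < h < δ and any choice of ξ_h ∈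 [x−h, x], |E_h − C_h⁻| ≤ C·h. -/
/-!
The interior function `v⁻` satisfies the five-point formula with error `O(h)`, so replacing
`v⁻(x - h)` by the exterior value `v⁺(x - h)` changes the truncation error by the jump
`(v⁺ - v⁻)(x - h) / h²`. The correction is the second-order Taylor polynomial at `ξ` of this same
jump, evaluated at `x - h` and divided by `h²`. The corrected error is therefore `h⁻²` times a sum
of four second-order Taylor remainders over distances at most `h`, each of them `O(h³)` uniformly in
the base point because the third derivatives are locally bounded.
-/

open Set Metric Filter Asymptotics Topology
open scoped Nat

section Taylor

theorem taylorWithinEval_eq_taylorWithinEval_univ {E : Type*} [NormedAddCommGroup E]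
    [NormedSpace ℝ E] {f : ℝ → E} {n : ℕ} {s : Set ℝ} {x₀ : ℝ} (hs : UniqueDiffOn ℝ s)
    (hx₀ : x₀ ∈ s) (hf : ContDiffAt ℝ n f x₀) (x : ℝ) :
    taylorWithinEval f n s x₀ x = taylorWithinEval f n univ x₀ x := by
  simp only [taylor_within_apply, iteratedDerivWithin_univ]
  refine Finset.sum_congr rfl fun k hk ↦ ?_
  have hkn : k ≤ n := Finset.mem_range_succ_iff.mp hk
  rw [iteratedDerivWithin_eq_iteratedDeriv hs (hf.of_le (mod_cast hkn)) hx₀]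

/-- The remainder at `x` of the Taylor polynomial of `f` of order `n` centred at `x₀`. -/
noncomputable def taylorRemainder (f : ℝ → ℝ) (n : ℕ) (x₀ x : ℝ) : ℝ :=
  f x - taylorWithinEval f n univ x₀ x

theorem taylorRemainder_two (f : ℝ → ℝ) (x₀ x : ℝ) :
    taylorRemainder f 2 x₀ x =
      f x - (f x₀ + deriv f x₀ * (x - x₀) + 1 / 2 * iteratedDeriv 2 f x₀ * (x - x₀) ^ 2) := by
  simp only [taylorRemainder, taylor_within_apply, Finset.sum_range_succ, Finset.sum_range_zero,
    iteratedDerivWithin_univ, iteratedDeriv_zero, iteratedDeriv_one, Nat.factorial, smul_eq_mul]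
  norm_num
  ring

theorem abs_taylorRemainder_le {f : ℝ → ℝ} {n : ℕ} {x₀ x K : ℝ}
    (hf : ∀ u ∈ uIcc x₀ x, ContDiffAt ℝ (n + 1) f u)
    (hK : ∀ u ∈ uIcc x₀ x, |iteratedDeriv (n + 1) f u| ≤ K) :
    |taylorRemainder f n x₀ x| ≤ K / (n + 1)! * |x - x₀| ^ (n + 1) := by
  rcases eq_or_ne x₀ x with rfl | hne
  · simp [taylorRemainder]
  obtain ⟨u, hu, hlagrange⟩ := taylor_mean_remainder_lagrange_iteratedDeriv hne
    fun u hu ↦ (hf u hu).contDiffWithinAt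
  rw [taylorWithinEval_eq_taylorWithinEval_univ (uniqueDiffOn_uIcc hne) left_mem_uIcc
    ((hf x₀ left_mem_uIcc).of_le (by norm_cast; omega))] at hlagrange
  have hKu : |iteratedDeriv (n + 1) f u| ≤ K := hK u (Ioo_subset_Icc_self hu)
  calc |taylorRemainder f n x₀ x|
      = |iteratedDeriv (n + 1) f u| / (n + 1)! * |x - x₀| ^ (n + 1) := by
        rw [taylorRemainder, hlagrange, abs_div, abs_mul, abs_pow, Nat.abs_cast]
        ring
    _ ≤ K / (n + 1)! * |x - x₀| ^ (n + 1) := by gcongr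

theorem isBigO_taylorRemainder {f : ℝ → ℝ} {n : ℕ} {x : ℝ} (hf : ContDiffAt ℝ (n + 1) f x) :
    (fun p : ℝ × ℝ ↦ taylorRemainder f n p.1 p.2) =O[𝓝 (x, x)] fun p ↦ (p.2 - p.1) ^ (n + 1) := by
  have hbdd : ∀ᶠ u in 𝓝 x, |iteratedDeriv (n + 1) f u| ≤ |iteratedDeriv (n + 1) f x| + 1 := by
    simp only [← Real.norm_eq_abs, ← norm_iteratedFDeriv_eq_norm_iteratedDeriv]
    exact (hf.continuousAt_iteratedFDeriv (by norm_cast)).norm.eventually_le_const (lt_add_one _)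
  obtain ⟨ε, hε, hball⟩ := Metric.eventually_nhds_iff_ball.mp ((hf.eventually (by simp)).and hbdd)
  refine IsBigO.of_bound ((|iteratedDeriv (n + 1) f x| + 1) / (n + 1)!) ?_
  filter_upwards [prod_mem_nhds (ball_mem_nhds x hε) (ball_mem_nhds x hε)] with p ⟨hp₁, hp₂⟩
  have hsub : uIcc p.1 p.2 ⊆ ball x ε := (convex_ball x ε).ordConnected.uIcc_subset hp₁ hp₂
  simpa only [norm_pow, Real.norm_eq_abs] using abs_taylorRemainder_le
    (fun u hu ↦ (hball u (hsub hu)).1) (fun u hu ↦ (hball u (hsub hu)).2)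

theorem exists_abs_taylorRemainder_le_of_mem_closedBall {f : ℝ → ℝ} {n : ℕ} {x : ℝ}
    (hf : ContDiffAt ℝ (n + 1) f x) :
    ∃ C > 0, ∃ δ > 0, ∀ h < δ, ∀ s ∈ closedBall x h, ∀ t ∈ closedBall x h, |t - s| ≤ h →
      |taylorRemainder f n s t| ≤ C * h ^ (n + 1) := by
  obtain ⟨C, hC, hbound⟩ := (isBigO_taylorRemainder hf).exists_pos
  obtain ⟨δ, hδ, hball⟩ := Metric.eventually_nhds_iff_ball.mp hbound.bound
  refine ⟨C, hC, δ, hδ, fun h hhδ s hs t ht hst ↦ ?_⟩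
  have hmem : (s, t) ∈ ball (x, x) δ := by
    rw [← ball_prod_same]
    exact ⟨closedBall_subset_ball hhδ hs, closedBall_subset_ball hhδ ht⟩
  calc |taylorRemainder f n s t| ≤ C * |t - s| ^ (n + 1) := by
        simpa only [norm_pow, Real.norm_eq_abs] using hball (s, t) hmem
    _ ≤ C * h ^ (n + 1) := by gcongr

end Taylor

section Correction

variable (fp fm : ℝ → ℝ) (x ξ h : ℝ)

/-- The truncation error `E_h` of the three-point second difference at the interior node `x` whose
left neighbour `x - h` is exterior; `fp` and `fm` are the restrictions of `v⁺` and `v⁻` to the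
horizontal grid line. -/
noncomputable def horizontalTruncationError : ℝ :=
  (fm (x + h) + fp (x - h) - 2 * fm x) / h ^ 2 - iteratedDeriv 2 fm x

/-- The KFBI correction `C_h⁻` at the interior node `x`, built from the jumps at the interface
abscissa `ξ` of the restrictions `fp`, `fm` of `v⁺`, `v⁻` to the horizontal grid line and of
their first two derivatives. -/
noncomputable def horizontalCorrection : ℝ :=
  1 / h ^ 2 *
    ((fp ξ - fm ξ) + (deriv fp ξ - deriv fm ξ) * (x - h - ξ)
      + 1 / 2 * (iteratedDeriv 2 fp ξ - iteratedDeriv 2 fm ξ) * (x - h - ξ) ^ 2)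

variable {h} in
theorem horizontalTruncationError_sub_horizontalCorrection (hh : h ≠ 0) :
    horizontalTruncationError fp fm x h - horizontalCorrection fp fm x ξ h =
      (taylorRemainder fm 2 x (x + h) + taylorRemainder fm 2 x (x - h)
        + taylorRemainder fp 2 ξ (x - h) - taylorRemainder fm 2 ξ (x - h)) / h ^ 2 := by
  simp only [horizontalTruncationError, horizontalCorrection, taylorRemainder_two]
  field

variable {fp fm x ξ h}

theorem abs_horizontalTruncationError_sub_horizontalCorrection_le {Cp Cm : ℝ} (hh : 0 < h)
    (hright : |taylorRemainder fm 2 x (x + h)| ≤ Cm * h ^ 3)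
    (hleft : |taylorRemainder fm 2 x (x - h)| ≤ Cm * h ^ 3)
    (hp : |taylorRemainder fp 2 ξ (x - h)| ≤ Cp * h ^ 3)
    (hm : |taylorRemainder fm 2 ξ (x - h)| ≤ Cm * h ^ 3) :
    |horizontalTruncationError fp fm x h - horizontalCorrection fp fm x ξ h| ≤
      (Cp + 3 * Cm) * h := by
  rw [horizontalTruncationError_sub_horizontalCorrection fp fm x ξ hh.ne', abs_div,
    abs_of_pos (pow_pos hh 2), div_le_iff₀ (pow_pos hh 2)]
  rw [abs_le] at hright hleft hp hm ⊢
  constructor <;> linarith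

theorem kfbi_horizontal_correction_interior_first_order_general
    (hfp : ContDiffAt ℝ 3 fp x) (hfm : ContDiffAt ℝ 3 fm x) :
    ∃ C > 0, ∃ δ > 0, ∀ h : ℝ, 0 < h → h < δ → ∀ ξ : ℝ, ξ ∈ Icc (x - h) x →
      |horizontalTruncationError fp fm x h - horizontalCorrection fp fm x ξ h| ≤ C * h := by
  obtain ⟨Cp, hCp, δp, hδp, hp⟩ :=
    exists_abs_taylorRemainder_le_of_mem_closedBall (n := 2) (by exact_mod_cast hfp)
  obtain ⟨Cm, hCm, δm, hδm, hm⟩ :=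
    exists_abs_taylorRemainder_le_of_mem_closedBall (n := 2) (by exact_mod_cast hfm)
  refine ⟨Cp + 3 * Cm, by positivity, min δp δm, lt_min hδp hδm, fun h hh hhδ ξ ⟨hξl, hξr⟩ ↦ ?_⟩
  obtain ⟨hhp, hhm⟩ := lt_min_iff.mp hhδ
  have hx : x ∈ closedBall x h := mem_closedBall_self hh.le
  have hr : x + h ∈ closedBall x h := by simp [abs_of_pos hh]
  have hl : x - h ∈ closedBall x h := by simp [abs_of_pos hh]
  have hξ : ξ ∈ closedBall x h := by rw [Real.closedBall_eq_Icc]; exact ⟨hξl, by linarith⟩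
  have hlξ : |x - h - ξ| ≤ h := abs_le.mpr ⟨by linarith, by linarith⟩
  exact abs_horizontalTruncationError_sub_horizontalCorrection_le hh
    (hm h hhm x hx (x + h) hr (by simp [abs_of_pos hh]))
    (hm h hhm x hx (x - h) hl (by simp [abs_of_pos hh]))
    (hp h hhp ξ hξ (x - h) hl hlξ) (hm h hhm ξ hξ (x - h) hl hlξ)

end Correction

/-- First-order accuracy of the KFBI horizontal correction at an interior
irregular node: the corrected truncation error is `O(h)`. -/
theorem kfbi_horizontal_correction_interior_first_order
    (vp vm : ℝ × ℝ → ℝ) (hvp : ContDiff ℝ 3 vp) (hvm : ContDiff ℝ 3 vm)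
    (x y : ℝ) :
    ∃ C > 0, ∃ δ > 0, ∀ h : ℝ, 0 < h → h < δ →
      ∀ ξ : ℝ, ξ ∈ Set.Icc (x - h) x →
      |((vm (x + h, y) + vp (x - h, y) - 2 * vm (x, y)) / h ^ 2
            - iteratedDeriv 2 (fun t => vm (t, y)) x)
        - ((1 / h ^ 2) *
            ((vp (ξ, y) - vm (ξ, y))
              + (deriv (fun t => vp (t, y)) ξ - deriv (fun t => vm (t, y)) ξ) * (x - h - ξ)
              + (1 / 2) *
                  (iteratedDeriv 2 (fun t => vp (t, y)) ξ
                    - iteratedDeriv 2 (fun t => vm (t, y)) ξ) * (x - h - ξ) ^ 2))|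
        ≤ C * h :=
  kfbi_horizontal_correction_interior_first_order_general
    (fp := fun t ↦ vp (t, y)) (fm := fun t ↦ vm (t, y)) (by fun_prop) (by fun_prop)
end
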